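/- Let F be a field equipped with a discrete additive valuation v : F → ℤ ∪ {∞} (so v(x·y) = v(x) + v(y), v(x + y) ≥ min(v(x), v(y)), v(x) = ∞ iff x = 0, and v(1) = 0). Let σ : F → F be a ring automorphism with σ∘σ = id and v(σ(x)) = v(x) for all x ∈ F. Let a, b, c, d ∈ F satisfy the unitarity relations (for the 2×2 identity hermitian matrix): a·σ(a) + b·σ(b) = 1, c·σ(c) + d·σ(d) = 1, a·σ(c) + b·σ(d) = 0, σ(a)·a + σ(c)·c = 1, σ(b)·b + σ(d)·d = 1, σ(a)·b + σ(c)·d = 0, and assume b ≠ 0 and c ≠ 0. Then: (i) a·σ(a) = d·σ(d) and b·σ(b) = c·σ(c), so v(a) = v(d) and v(b) = v(c); and (ii) for every integer m ≥ 1, one has v(1 − a·σ(a)) = −2m if and only if v(a) = v(b) = v(c) = v(d) = −m. -/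

import Mathlib

/-! Unitarity gives `b σ(b) = 1 - a σ(a) = c σ(c)` and `a σ(a) = 1 - c σ(c) = d σ(d)`. Since `v` is
`σ`-invariant, `v (x σ(x)) = 2 v(x)`, and halving (`WithTop.add_self_inj_int`) yields `v a = v d` and
`v b = v c`. Likewise `v (1 - a σ(a)) = -2m` says exactly that `v b = -m`. When `m ≥ 1` this is
negative, so in `a σ(a) + b σ(b) = 1` the two summands must have the same valuation
(`val_le_of_add_eq_one`, used in both directions), which forces `v a = -m` as well. -/

theorem WithTop.add_self_inj_int {x y : WithTop ℤ} (h : x + x = y + y) : x = y := by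
  induction x using WithTop.recTopCoe with
  | top =>
    induction y using WithTop.recTopCoe with
    | top => rfl
    | coe y => exact absurd h.symm (by simp [← WithTop.coe_add])
  | coe x =>
    induction y using WithTop.recTopCoe with
    | top => exact absurd h (by simp [← WithTop.coe_add])
    | coe y =>
      norm_cast at h ⊢
      omega

/-- If two elements sum to `1` and one has negative valuation, then the other has valuation at most
that: otherwise the ultrametric inequality for `x = 1 - y` is violated. -/
theorem val_le_of_add_eq_one {F : Type*} [Field F] (v : F → WithTop ℤ)
    (hmul : ∀ x y : F, v (x * y) = v x + v y)
    (hadd : ∀ x y : F, min (v x) (v y) ≤ v (x + y))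
    (hone : v 1 = 0) {x y : F} (h : x + y = 1) (hx : v x < 0) : v y ≤ v x := by
  have hneg1 : v (-1) = 0 := by
    apply WithTop.add_self_inj_int
    rw [← hmul]
    simp [hone]
  have hneg : v (-y) = v y := by
    rw [← neg_one_mul, hmul, hneg1, zero_add]
  have hxy : x = 1 + -y := by linear_combination h
  have hmin := hadd 1 (-y)
  rw [← hxy, hone, hneg] at hmin
  rcases min_le_iff.1 hmin with h0 | h0
  · exact absurd hx (not_lt.2 h0)
  · exact h0

/-- Valuation computation for regular semisimple elements of `U(W₀)` (identity
Gram matrix) in the `n = 1` orbital integral computation: the support condition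
for `φ_m` amounts to all four matrix entries having valuation exactly `-m`. -/
theorem unitary_entry_valuations {F : Type*} [Field F] (v : F → WithTop ℤ)
    (hmul : ∀ x y : F, v (x * y) = v x + v y)
    (hadd : ∀ x y : F, min (v x) (v y) ≤ v (x + y))
    (hzero : ∀ x : F, v x = ⊤ ↔ x = 0)
    (hone : v 1 = 0)
    (σ : F ≃+* F)
    (hσ : ∀ x : F, σ (σ x) = x)
    (hvσ : ∀ x : F, v (σ x) = v x)
    (a b c d : F)
    (h1 : a * σ a + b * σ b = 1)
    (h2 : c * σ c + d * σ d = 1)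
    (h3 : a * σ c + b * σ d = 0)
    (h4 : σ a * a + σ c * c = 1)
    (h5 : σ b * b + σ d * d = 1)
    (h6 : σ a * b + σ c * d = 0)
    (hb : b ≠ 0) (hc : c ≠ 0) :
    (a * σ a = d * σ d ∧ b * σ b = c * σ c ∧ v a = v d ∧ v b = v c) ∧
      (∀ m : ℕ, 1 ≤ m →
        (v (1 - a * σ a) = ((-2 * (m : ℤ) : ℤ) : WithTop ℤ) ↔
          (v a = ((-(m : ℤ) : ℤ) : WithTop ℤ) ∧
           v b = ((-(m : ℤ) : ℤ) : WithTop ℤ) ∧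
           v c = ((-(m : ℤ) : ℤ) : WithTop ℤ) ∧
           v d = ((-(m : ℤ) : ℤ) : WithTop ℤ)))) := by
  have e1 : a * σ a = d * σ d := by linear_combination h4 - h2
  have e2 : b * σ b = c * σ c := by linear_combination h1 - h4
  have norm_val (x : F) : v (x * σ x) = v x + v x := by rw [hmul, hvσ]
  have had : v a = v d :=
    WithTop.add_self_inj_int (by rw [← norm_val, ← norm_val, e1])
  have hbc : v b = v c :=
    WithTop.add_self_inj_int (by rw [← norm_val, ← norm_val, e2])
  refine ⟨⟨e1, e2, had, hbc⟩, fun m hm => ?_⟩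
  have e3 : 1 - a * σ a = b * σ b := by linear_combination -h1
  have hdouble : ((-2 * (m : ℤ) : ℤ) : WithTop ℤ) =
      ((-(m : ℤ) : ℤ) : WithTop ℤ) + ((-(m : ℤ) : ℤ) : WithTop ℤ) := by
    rw [← WithTop.coe_add]
    congr 1
    ring
  rw [e3, norm_val, hdouble]
  constructor
  · intro h
    have hvb := WithTop.add_self_inj_int h
    have hbneg : v (b * σ b) < 0 := by
      rw [norm_val, h, ← hdouble]
      have : -2 * (m : ℤ) < 0 := by omega
      exact_mod_cast this
    have hle := val_le_of_add_eq_one v hmul hadd hone ((add_comm _ _).trans h1) hbneg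
    have hge := val_le_of_add_eq_one v hmul hadd hone h1 (hle.trans_lt hbneg)
    have hab : v a = v b :=
      WithTop.add_self_inj_int (by rw [← norm_val, ← norm_val]; exact le_antisymm hle hge)
    exact ⟨hab.trans hvb, hvb, hbc ▸ hvb, had ▸ hab.trans hvb⟩
  · rintro ⟨-, hvb, -, -⟩
    rw [hvb]
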